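/- arXiv:0711.1993 — 4 statements merged into one kernel-verified Lean document; each statement's English description precedes it below -/
import Mathlib

section
/- Let (L, ≤) be a finite lattice that is ∨-minimal regular, i.e. every maximal chain of L has length |J(L)| (equivalently, contains exactly |J(L)|+1 elements). Then the set system (J(L), η(L)), where η(L) = {η(a) : a ∈ L}, is a regular set system: every maximal chain of the family η(L) ordered by inclusion has length |J(L)|. -/
open Finset

variable {L : Type*} [Lattice L] [Fintype L] [BoundedOrder L] [DecidableEq L]

noncomputable instance : Fintype {x : L // SupIrred x} := Fintype.ofFinite _

/-- `c = (c 0, …, c m)` is a maximal chain of the lattice `L`: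
`⊥ = c 0 ≺ c 1 ≺ ⋯ ≺ c m = ⊤`, where `≺` is the covering relation.
Its length is `m`. -/
def IsMaxChainLat (m : ℕ) (c : Fin (m + 1) → L) : Prop :=
  c 0 = ⊥ ∧ c (Fin.last m) = ⊤ ∧ ∀ i : Fin m, c i.castSucc ⋖ c i.succ

/-- `η(a) = {x ∈ J(L) : x ≤ a}`, where `J(L)` is the set of `∨`-irreducible
elements of `L`. -/
noncomputable def eta (a : L) : Finset {x : L // SupIrred x} :=
  @Finset.filter _ (fun x => (x : L) ≤ a) (Classical.decPred _) Finset.univ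

/-- The set system `η(L) = {η(a) : a ∈ L}` on the ground set `J(L)`. -/
noncomputable def etaSystem (L : Type*) [Lattice L] [Fintype L] [DecidableEq L] :
    Finset (Finset {x : L // SupIrred x}) :=
  Finset.univ.image eta

/-- `c = (c 0, …, c m)` is a maximal chain of the set system `S`. -/
def IsMaxChainOf {β : Type*} [Fintype β] (S : Finset (Finset β)) (m : ℕ)
    (c : Fin (m + 1) → Finset β) : Prop :=
  c 0 = ∅ ∧ c (Fin.last m) = Finset.univ ∧ (∀ i, c i ∈ S) ∧
    (∀ i : Fin m, c i.castSucc ⊂ c i.succ) ∧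
    (∀ i : Fin m, ∀ x ∈ S, ¬(c i.castSucc ⊂ x ∧ x ⊂ c i.succ))

/-- A regular set system: `∅` and the ground set belong to it, and every maximal
chain has length equal to the cardinality of the ground set. -/
def IsRegularSetSystem {β : Type*} [Fintype β] (S : Finset (Finset β)) : Prop :=
  ∅ ∈ S ∧ Finset.univ ∈ S ∧
    ∀ (m : ℕ) (c : Fin (m + 1) → Finset β), IsMaxChainOf S m c → m = Fintype.card β

theorem eta_subset_iff_aux {M : Type*} [Lattice M] [Fintype M] (a b : M) :
    eta a ⊆ eta b ↔ a ≤ b := by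
  classical
  constructor
  · intro h
    haveI : Nonempty M := ⟨a⟩
    letI : OrderBot M := Fintype.toOrderBot M
    obtain ⟨s, hs, hirr⟩ := exists_supIrred_decomposition a
    rw [← hs]
    refine Finset.sup_le fun x hx => ?_
    have hxa : x ≤ a := by
      rw [← hs]
      exact Finset.le_sup (f := id) hx
    have h1 : (⟨x, hirr hx⟩ : {x : M // SupIrred x}) ∈ eta a := by
      simp [eta, hxa]
    have h2 := h h1
    simpa [eta] using h2
  · intro h x hx
    simp only [eta, Finset.mem_filter, Finset.mem_univ, true_and] at hx ⊢
    exact hx.trans h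

theorem eta_ssubset_iff_aux {M : Type*} [Lattice M] [Fintype M] (a b : M) :
    eta a ⊂ eta b ↔ a < b := by
  rw [Finset.ssubset_iff_subset_ne, lt_iff_le_not_ge, ← eta_subset_iff_aux a b,
    ← eta_subset_iff_aux b a]
  constructor
  · rintro ⟨h, hne⟩
    exact ⟨h, fun h' => hne (h.antisymm h')⟩
  · rintro ⟨h, h'⟩
    exact ⟨h, fun e => h' e.ge⟩

/-- if the finite lattice `L` is `∨`-minimal regular (every maximal
chain of `L` has length `|J(L)|`), then `(J(L), η(L))` is a regular set system. -/
theorem etaSystem_isRegularSetSystem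
    (hreg : ∀ (m : ℕ) (c : Fin (m + 1) → L), IsMaxChainLat m c →
      m = Fintype.card {x : L // SupIrred x}) :
    IsRegularSetSystem (etaSystem L) := by
  have hbot : eta (⊥ : L) = ∅ := by
    ext x
    simpa [eta] using x.2.ne_bot
  have htop : eta (⊤ : L) = Finset.univ := by
    ext x
    simp [eta]
  have hmem : ∀ a : L, eta a ∈ etaSystem L := fun a =>
    Finset.mem_image_of_mem _ (Finset.mem_univ a)
  have hinj : ∀ a b : L, eta a = eta b → a = b := fun a b h =>
    le_antisymm ((eta_subset_iff_aux a b).1 h.le) ((eta_subset_iff_aux b a).1 h.ge)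
  refine ⟨hbot ▸ hmem ⊥, htop ▸ hmem ⊤, ?_⟩
  rintro m c ⟨h0, hl, hS, hlt, hno⟩
  have hex : ∀ i, ∃ a : L, eta a = c i := fun i => by
    obtain ⟨a, -, ha⟩ := Finset.mem_image.1 (hS i)
    exact ⟨a, ha⟩
  choose d hd using hex
  refine hreg m d ⟨hinj _ _ ?_, hinj _ _ ?_, fun i => ⟨?_, fun x h1 h2 => ?_⟩⟩
  · rw [hd, h0, hbot]
  · rw [hd, hl, htop]
  · rw [← eta_ssubset_iff_aux, hd, hd]
    exact hlt i
  · rw [← eta_ssubset_iff_aux, hd] at h1 h2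
    exact hno i _ (hmem x) ⟨h1, h2⟩
end

section
/- Let (L, ≤) be a finite lattice that is ∨-minimal regular and set n = |J(L)|. Then for every maximal chain C = (c_0, c_1, …, c_n) of L and every i ∈ {1, …, n}, there exists j ∈ J(L) such that η(c_i) = η(c_{i-1}) ∪ {j}; equivalently, |η(c_i)| = i for all i. -/
open Finset

variable {L : Type*} [Lattice L] [Fintype L] [BoundedOrder L] [DecidableEq L]

theorem eta_ssubset_of_lt {a b : L} (h : a < b) : eta a ⊂ eta b := by
  classical
  refine Finset.ssubset_iff_subset_ne.2 ⟨?_, ?_⟩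
  · intro x hx
    simp only [eta, Finset.mem_filter, Finset.mem_univ, true_and] at hx ⊢
    exact hx.trans h.le
  · intro he
    obtain ⟨s, hs, hirr⟩ := exists_supIrred_decomposition b
    apply h.not_ge
    rw [← hs]
    refine Finset.sup_le fun x hx => ?_
    have hxb : x ≤ b := hs ▸ Finset.le_sup (f := id) hx
    have hm : (⟨x, hirr hx⟩ : {x : L // SupIrred x}) ∈ eta b := by
      simp [eta, hxb]
    rw [← he] at hm
    simpa [eta] using hm

/-- if the finite lattice `L` is `∨`-minimal regular with
`n = |J(L)|`, then along every maximal chain `c` of `L`, each step adds exactly one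
`∨`-irreducible element to `η`: `η(c i) = η(c (i-1)) ∪ {j}` for some `j ∈ J(L)`;
equivalently `|η(c i)| = i` for all `i`. -/
theorem eta_succ_eq_insert_of_supMinimalRegular
    (hreg : ∀ (m : ℕ) (c : Fin (m + 1) → L), IsMaxChainLat m c →
      m = Fintype.card {x : L // SupIrred x})
    (c : Fin (Fintype.card {x : L // SupIrred x} + 1) → L)
    (hc : IsMaxChainLat (Fintype.card {x : L // SupIrred x}) c) :
    (∀ i : Fin (Fintype.card {x : L // SupIrred x}),
        ∃ j : {x : L // SupIrred x}, eta (c i.succ) = insert j (eta (c i.castSucc))) ∧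
      ∀ i : Fin (Fintype.card {x : L // SupIrred x} + 1), (eta (c i)).card = (i : ℕ) := by
  have hlt : ∀ i : Fin (Fintype.card {x : L // SupIrred x}),
      (eta (c i.castSucc)).card < (eta (c i.succ)).card := fun i =>
    Finset.card_lt_card (eta_ssubset_of_lt (hc.2.2 i).lt)
  have hlow : ∀ i : Fin (Fintype.card {x : L // SupIrred x} + 1),
      (i : ℕ) ≤ (eta (c i)).card := by
    intro i
    induction i using Fin.induction with
    | zero => simp
    | succ i ih =>
      have := hlt i
      simp only [Fin.val_castSucc, Fin.val_succ] at ih ⊢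
      omega
  have hup : ∀ i : Fin (Fintype.card {x : L // SupIrred x} + 1),
      (eta (c i)).card ≤ (i : ℕ) := by
    intro i
    induction i using Fin.reverseInduction with
    | last => simpa using Finset.card_le_univ (eta (c (Fin.last _)))
    | cast i ih =>
      have := hlt i
      simp only [Fin.val_castSucc, Fin.val_succ] at ih ⊢
      omega
  have hcard := fun i => le_antisymm (hup i) (hlow i)
  refine ⟨fun i => ?_, hcard⟩
  have hss := eta_ssubset_of_lt (hc.2.2 i).lt
  obtain ⟨j, hj, hj'⟩ := Finset.exists_of_ssubset hss
  refine ⟨j, (Finset.eq_of_subset_of_card_le ?_ ?_).symm⟩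
  · exact Finset.insert_subset hj hss.subset
  · rw [Finset.card_insert_of_notMem hj', hcard, hcard]
    simp
end

section
/- If (N, 𝔄) is an antimatroid on the finite set N with |N| = n, then the lattice (𝔄, ⊆) has exactly n ∧-irreducible elements, i.e. |M(𝔄)| = n. -/
open Finset

variable {α : Type*} [DecidableEq α] [Fintype α]

/-- `(N, S)` is a convex geometry. -/
def IsConvexGeometry (S : Finset (Finset α)) : Prop :=
  ∅ ∈ S ∧ Finset.univ ∈ S ∧ (∀ A ∈ S, ∀ B ∈ S, A ∩ B ∈ S) ∧
    ∀ A ∈ S, A ≠ Finset.univ → ∃ i ∉ A, insert i A ∈ S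

/-- The meet in the lattice `(𝔄, ⊆)` of an antimatroid:
`A ∧ B = ⋃ {Z ∈ 𝔄 : Z ⊆ A ∩ B}`. -/
def amInf (𝔄 : Finset (Finset α)) (A B : Finset α) : Finset α :=
  (𝔄.filter fun Z => Z ⊆ A ∩ B).sup id

/-- an antimatroid on `N` with `|N| = n` has exactly `n`
`∧`-irreducible elements (the top element of `(𝔄, ⊆)` being `N`). -/
theorem antimatroid_card_infIrred (S 𝔄 : Finset (Finset α))
    (hS : IsConvexGeometry S) (h𝔄 : 𝔄 = S.image (fun A => Finset.univ \ A)) :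
    (𝔄.filter fun X =>
        X ≠ Finset.univ ∧ ∀ A ∈ 𝔄, ∀ B ∈ 𝔄, amInf 𝔄 A B = X → A = X ∨ B = X).card
      = Fintype.card α := by
  obtain ⟨h0, h1, hI, hE⟩ := hS
  have mem : ∀ X, X ∈ 𝔄 ↔ Xᶜ ∈ S := by
    intro X
    rw [h𝔄, mem_image]
    constructor
    · rintro ⟨A, hA, rfl⟩
      simpa [← compl_eq_univ_sdiff] using hA
    · intro h
      exact ⟨Xᶜ, h, by simp [← compl_eq_univ_sdiff]⟩
  have e0 : ∅ ∈ 𝔄 := by rw [mem]; simpa using h1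
  have e1 : univ ∈ 𝔄 := by rw [mem]; simpa using h0
  have eU : ∀ A ∈ 𝔄, ∀ B ∈ 𝔄, A ∪ B ∈ 𝔄 := by
    intro A hA B hB
    rw [mem] at *
    rw [compl_union]
    exact hI _ hA _ hB
  have eE : ∀ A ∈ 𝔄, A ≠ ∅ → ∃ i ∈ A, A.erase i ∈ 𝔄 := by
    intro A hA hne
    rw [mem] at hA
    obtain ⟨i, hi, h⟩ := hE _ hA (by simpa using hne)
    refine ⟨i, by simpa using hi, ?_⟩
    rw [mem, compl_erase]
    exact h
  clear hE hI h0 h1 mem h𝔄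
  have eS : ∀ p : Finset α → Prop, ∀ [DecidablePred p], (𝔄.filter p).sup id ∈ 𝔄 := by
    intro p _
    apply Finset.sup_induction (p := fun X => X ∈ 𝔄) e0 eU
    intro b hb
    exact (mem_filter.1 hb).1
  have infmem : ∀ A B, amInf 𝔄 A B ∈ 𝔄 := fun A B => eS _
  have infsub : ∀ A B, amInf 𝔄 A B ⊆ A ∩ B := by
    intro A B
    apply Finset.sup_le
    intro b hb
    exact (mem_filter.1 hb).2
  have lesub : ∀ A B, ∀ Z ∈ 𝔄, Z ⊆ A → Z ⊆ B → Z ⊆ amInf 𝔄 A B := by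
    intro A B Z hZ hA hB
    exact Finset.le_sup (f := id) (mem_filter.2 ⟨hZ, subset_inter hA hB⟩)
  obtain ⟨M, hM⟩ : ∃ M : α → Finset α, ∀ i, M i = (𝔄.filter fun Z => i ∉ Z).sup id :=
    ⟨_, fun _ => rfl⟩
  have Mmem : ∀ i, M i ∈ 𝔄 := fun i => by rw [hM]; exact eS _
  have Mnot : ∀ i, i ∉ M i := by
    intro i hi
    rw [hM, Finset.mem_sup] at hi
    obtain ⟨Z, hZ, h⟩ := hi
    exact (mem_filter.1 hZ).2 h
  have Mle : ∀ i, ∀ Z ∈ 𝔄, i ∉ Z → Z ⊆ M i := by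
    intro i Z hZ h
    rw [hM]
    exact Finset.le_sup (f := id) (mem_filter.2 ⟨hZ, h⟩)
  have Mins : ∀ i, insert i (M i) ∈ 𝔄 := by
    intro i
    obtain ⟨Y, hY, hmin⟩ := Finset.exists_min_image (𝔄.filter fun Z => i ∈ Z) Finset.card
      ⟨univ, by simp [e1]⟩
    obtain ⟨hYA, hiY⟩ := mem_filter.1 hY
    obtain ⟨j, hj, hjY⟩ := eE Y hYA (ne_empty_of_mem hiY)
    have hij : j = i := by
      by_contra hne
      have := hmin (Y.erase j) (mem_filter.2 ⟨hjY, mem_erase.2 ⟨Ne.symm hne, hiY⟩⟩)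
      have := card_erase_lt_of_mem hj
      omega
    subst hij
    have h := Mle j _ hjY (by simp)
    have : insert j (M j) = Y ∪ M j := by
      rw [← insert_erase hj, insert_union, union_eq_right.2 h]
    rw [this]
    exact eU _ hYA _ (Mmem j)
  have Minj : Function.Injective M := by
    intro i j h
    by_contra hne
    have := Mle j _ (Mins i) (by
      rw [mem_insert, h]
      rintro (h | h)
      · exact hne h.symm
      · exact Mnot j h)
    rw [← h] at this
    exact Mnot i (this (mem_insert_self _ _))
  have key : (𝔄.filter fun X =>
        X ≠ Finset.univ ∧ ∀ A ∈ 𝔄, ∀ B ∈ 𝔄, amInf 𝔄 A B = X → A = X ∨ B = X)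
      = univ.image M := by
    ext X
    simp only [mem_filter, mem_image, mem_univ, true_and]
    constructor
    · rintro ⟨hX, hne, hirr⟩
      obtain ⟨W, hW, hmin⟩ := Finset.exists_min_image (𝔄.filter fun Z => X ⊂ Z) Finset.card
        ⟨univ, by simp [e1, ssubset_univ_iff, hne]⟩
      obtain ⟨hW, hXW⟩ := mem_filter.1 hW
      obtain ⟨i, hiW, hiX⟩ := exists_of_ssubset hXW
      have hsub : X ⊆ amInf 𝔄 W (M i) := lesub _ _ X hX hXW.1 (Mle i X hX hiX)
      have hle := infsub W (M i)
      have heq : amInf 𝔄 W (M i) = X := by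
        by_contra hn
        have h1 := hmin _ (mem_filter.2 ⟨infmem W (M i), hsub.ssubset_of_ne (Ne.symm hn)⟩)
        have h2 := eq_of_subset_of_card_le (hle.trans inter_subset_left) h1
        rw [h2] at hle
        exact Mnot i (mem_inter.1 (hle hiW)).2
      rcases hirr _ hW _ (Mmem i) heq with h | h
      · exact absurd h.symm hXW.ne
      · exact ⟨i, h⟩
    · rintro ⟨i, rfl⟩
      refine ⟨Mmem i, fun h => Mnot i (h ▸ mem_univ i), ?_⟩
      intro A hA B hB h
      by_contra! hc
      have hsub := infsub A B
      rw [h] at hsub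
      have aux : ∀ C ∈ 𝔄, M i ⊆ C → C ≠ M i → insert i (M i) ⊆ C := by
        intro C hC hs hn
        refine insert_subset ?_ hs
        by_contra hi
        exact hn ((Mle i C hC hi).antisymm hs)
      have := lesub A B _ (Mins i) (aux A hA (hsub.trans inter_subset_left) hc.1)
        (aux B hB (hsub.trans inter_subset_right) hc.2)
      rw [h] at this
      exact Mnot i (this (mem_insert_self _ _))
  rw [key, card_image_of_injective _ Minj, card_univ]
end

section
/- Let N be a finite set with |N| = n and let 𝒬(N) := {(A, B) ∈ 2^N × 2^N : A ∩ B = ∅} be ordered by (A_1, A_2) ⊑ (B_1, B_2) iff A_1 ⊆ B_1 and A_2 ⊇ B_2. Then the number of maximal chains of the lattice (𝒬(N), ⊑) equals (2n)! / 2^n. -/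
open Finset

variable {α : Type*} [DecidableEq α] [Fintype α]

/-- The order `⊑` on `𝒬(N)`: `(A₁, A₂) ⊑ (B₁, B₂)` iff `A₁ ⊆ B₁` and `A₂ ⊇ B₂`. -/
def QLE (p q : Finset α × Finset α) : Prop := p.1 ⊆ q.1 ∧ q.2 ⊆ p.2

/-- The corresponding strict order on `𝒬(N)`. -/
def QLT (p q : Finset α × Finset α) : Prop := QLE p q ∧ p ≠ q

/-- `c = (c 0, …, c m)` is a maximal chain of the lattice `(𝒬(N), ⊑)`, where
`𝒬(N) = {(A, B) : A ∩ B = ∅}`: it goes from the bottom `(∅, N)` to the top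
`(N, ∅)` and each consecutive pair is a covering pair in `𝒬(N)`. -/
def IsQMaxChain (m : ℕ) (c : Fin (m + 1) → Finset α × Finset α) : Prop :=
  (∀ i, (c i).1 ∩ (c i).2 = ∅) ∧
    c 0 = (∅, Finset.univ) ∧ c (Fin.last m) = (Finset.univ, ∅) ∧
    ∀ i : Fin m, QLT (c i.castSucc) (c i.succ) ∧
      ∀ x : Finset α × Finset α, x.1 ∩ x.2 = ∅ →
        ¬(QLT (c i.castSucc) x ∧ QLT x (c i.succ))

/-- The covering condition used in `IsQMaxChain`. -/
def QStep (p q : Finset α × Finset α) : Prop :=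
  QLT p q ∧ ∀ x : Finset α × Finset α, x.1 ∩ x.2 = ∅ → ¬(QLT p x ∧ QLT x q)

/-- Saturated chains of length `m` from `p` to the top. -/
def QT (m : ℕ) (p : Finset α × Finset α) (c : Fin (m + 1) → Finset α × Finset α) : Prop :=
  (∀ i, (c i).1 ∩ (c i).2 = ∅) ∧
    c 0 = p ∧ c (Fin.last m) = (Finset.univ, ∅) ∧
    ∀ i : Fin m, QStep (c i.castSucc) (c i.succ)

theorem qstep_iff (p q : Finset α × Finset α) (hp : p.1 ∩ p.2 = ∅) :
    (q.1 ∩ q.2 = ∅ ∧ QStep p q) ↔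
      q ∈ (p.2.image (fun x => (p.1, p.2.erase x))) ∪
        ((univ \ (p.1 ∪ p.2)).image (fun x => (insert x p.1, p.2))) := by
  obtain ⟨A, B⟩ := p
  obtain ⟨C, D⟩ := q
  simp only [mem_union, mem_image, mem_sdiff, mem_univ, true_and, Prod.mk.injEq] at hp ⊢
  have hd : ∀ x, x ∈ A → x ∉ B := by
    intro x h1 h2
    have : x ∈ A ∩ B := mem_inter.2 ⟨h1, h2⟩
    simp [hp] at this
  constructor
  · rintro ⟨hq, ⟨⟨h1, h2⟩, hne⟩, hc⟩
    have hd' : ∀ x, x ∈ C → x ∉ D := by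
      intro x h1 h2
      have : x ∈ C ∩ D := mem_inter.2 ⟨h1, h2⟩
      simp [hq] at this
    dsimp only at h1 h2
    by_cases hBD : B = D
    · subst hBD
      right
      have : ∃ x ∈ C, x ∉ A := by
        by_contra! h
        exact hne (by rw [Subset.antisymm h1 h])
      obtain ⟨x, hxC, hxA⟩ := this
      have hxB := hd' x hxC
      refine ⟨x, by simp [hxA, hxB], ?_, rfl⟩
      by_contra hn
      refine hc (insert x A, B) ?_ ⟨⟨⟨subset_insert _ _, Subset.refl _⟩, ?_⟩,
        ⟨⟨insert_subset hxC h1, Subset.refl _⟩, ?_⟩⟩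
      · simp [insert_inter_of_notMem hxB, hp]
      · intro h
        have := congrArg Prod.fst h
        exact hxA (by rw [show A = insert x A from this]; simp)
      · intro h
        exact hn (congrArg Prod.fst h)
    · left
      have : ∃ x ∈ B, x ∉ D := by
        by_contra! h
        exact hBD (Subset.antisymm h h2)
      obtain ⟨x, hxB, hxD⟩ := this
      refine ⟨x, hxB, ?_⟩
      by_contra hn
      refine hc (A, B.erase x) ?_ ⟨⟨⟨Subset.refl _, erase_subset _ _⟩, ?_⟩,
        ⟨⟨h1, subset_erase.2 ⟨h2, hxD⟩⟩, ?_⟩⟩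
      · ext y; simp; intro h1 _; exact hd y h1
      · intro h
        have := congrArg Prod.snd h
        have h3 : x ∈ B.erase x := by rw [← show B = B.erase x from this]; exact hxB
        simp at h3
      · intro h
        exact hn ⟨congrArg Prod.fst h, congrArg Prod.snd h⟩
  · rintro (⟨x, hx, rfl, rfl⟩ | ⟨x, hx, rfl, rfl⟩)
    · refine ⟨?_, ⟨⟨Subset.refl _, erase_subset _ _⟩, ?_⟩, ?_⟩
      · ext y; simp; intro h1 _; exact hd y h1
      · intro h
        have := congrArg Prod.snd h
        have h3 : x ∈ B.erase x := by rw [← show B = B.erase x from this]; exact hx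
        simp at h3
      · rintro ⟨E, F⟩ _ ⟨⟨⟨a1, a2⟩, a3⟩, ⟨⟨b1, b2⟩, b3⟩⟩
        dsimp only at a1 a2 b1 b2
        have hE : A = E := Subset.antisymm a1 b1
        subst hE
        by_cases hxF : x ∈ F
        · apply a3
          have : B = F := by
            apply Subset.antisymm _ a2
            intro y hy
            by_cases h : y = x
            · exact h ▸ hxF
            · exact b2 (mem_erase.2 ⟨h, hy⟩)
          rw [this]
        · apply b3
          have : F = B.erase x := Subset.antisymm (subset_erase.2 ⟨a2, hxF⟩) b2
          rw [this]
    · simp only [mem_union, not_or] at hx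
      refine ⟨?_, ⟨⟨subset_insert _ _, Subset.refl _⟩, ?_⟩, ?_⟩
      · simp [insert_inter_of_notMem hx.2, hp]
      · intro h
        have := congrArg Prod.fst h
        exact hx.1 (by rw [show A = insert x A from this]; simp)
      · rintro ⟨E, F⟩ _ ⟨⟨⟨a1, a2⟩, a3⟩, ⟨⟨b1, b2⟩, b3⟩⟩
        dsimp only at a1 a2 b1 b2
        have hE : B = F := Subset.antisymm b2 a2
        subst hE
        by_cases hxE : x ∈ E
        · apply b3
          have : E = insert x A := Subset.antisymm b1 (insert_subset hxE a1)
          rw [this]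
        · apply a3
          have : A = E := by
            apply Subset.antisymm a1
            intro y hy
            rcases mem_insert.1 (b1 hy) with h | h
            · exact absurd (h ▸ hy) hxE
            · exact h
          rw [this]

/-- Splitting off the first step of a chain. -/
def qtEquiv (m : ℕ) (p : Finset α × Finset α) (hp : p.1 ∩ p.2 = ∅) :
    {c // QT (m + 1) p c} ≃
      Σ q : {q : Finset α × Finset α // q.1 ∩ q.2 = ∅ ∧ QStep p q}, {c // QT m q.1 c} where
  toFun c := ⟨⟨c.1 1, c.2.1 1, by
      have := c.2.2.2.2 0
      simpa [c.2.2.1] using this⟩,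
    ⟨Fin.tail c.1, fun i => c.2.1 _, rfl, c.2.2.2.1, fun i => c.2.2.2.2 i.succ⟩⟩
  invFun d := ⟨Fin.cons p d.2.1, by
    refine ⟨?_, rfl, ?_, ?_⟩
    · intro i
      refine Fin.cases ?_ (fun j => ?_) i
      · exact hp
      · exact d.2.2.1 j
    · exact d.2.2.2.2.1
    · intro i
      refine Fin.cases ?_ (fun j => ?_) i
      · have h := d.1.2.2
        have h0 := d.2.2.2.1
        rw [← h0] at h
        exact h
      · exact d.2.2.2.2.2 j⟩
  left_inv c := by
    apply Subtype.ext
    have h := c.2.2.1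
    conv_rhs => rw [← Fin.cons_self_tail c.1]
    rw [h]
  right_inv d := by
    obtain ⟨⟨q, hq⟩, ⟨c, hc⟩⟩ := d
    have h0 := hc.2.1
    dsimp only at h0
    subst h0
    rfl

theorem card_qt (m : ℕ) : ∀ p : Finset α × Finset α, p.1 ∩ p.2 = ∅ →
    Nat.card {c // QT m p c} * 2 ^ p.2.card =
      if m = 2 * p.2.card + (univ \ (p.1 ∪ p.2)).card then m.factorial else 0 := by
  induction m with
  | zero =>
    rintro ⟨A, B⟩ hp
    dsimp only at hp ⊢
    by_cases h : A = univ ∧ B = ∅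
    · obtain ⟨rfl, rfl⟩ := h
      have : Nat.card {c // QT 0 ((univ : Finset α), (∅ : Finset α)) c} = 1 := by
        rw [Nat.card_eq_one_iff_unique]
        refine ⟨⟨?_⟩, ⟨⟨fun _ => (univ, ∅), ?_⟩⟩⟩
        · rintro ⟨c, hc⟩ ⟨d, hd⟩
          apply Subtype.ext
          funext i
          rw [show i = 0 from Fin.ext (by have := i.2; simp only [Fin.val_zero]; omega)]
          exact hc.2.1.trans hd.2.1.symm
        · exact ⟨fun _ => by simp, rfl, rfl, fun i => i.elim0⟩
      rw [this]
      simp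
    · have : IsEmpty {c // QT 0 (A, B) c} := by
        refine ⟨fun c => h ?_⟩
        have h1 := c.2.2.1
        have h2 := c.2.2.2.1
        have h3 := h1.symm.trans h2
        exact ⟨congrArg Prod.fst h3, congrArg Prod.snd h3⟩
      rw [Nat.card_of_isEmpty, if_neg]
      · simp
      · intro h0
        have hB : B = ∅ := card_eq_zero.1 (by omega)
        have hU : univ \ (A ∪ B) = ∅ := card_eq_zero.1 (by omega)
        refine h ⟨?_, hB⟩
        rw [hB, union_empty, sdiff_eq_empty_iff_subset] at hU
        exact univ_subset_iff.1 hU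
  | succ m ih =>
    rintro ⟨A, B⟩ hp
    have hd : ∀ x, x ∈ A → x ∉ B := by
      intro x h1 h2
      have : x ∈ A ∩ B := mem_inter.2 ⟨h1, h2⟩
      simp [show A ∩ B = ∅ from hp] at this
    classical
    have key : Nat.card {c // QT (m + 1) (A, B) c} =
        ∑ x ∈ B, Nat.card {c // QT m (A, B.erase x) c} +
        ∑ x ∈ univ \ (A ∪ B), Nat.card {c // QT m (insert x A, B) c} := by
      rw [Nat.card_congr (qtEquiv m (A, B) hp), Nat.card_sigma]
      rw [← Finset.sum_subtype (p := fun q => q.1 ∩ q.2 = ∅ ∧ QStep (A, B) q) _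
        (fun q => (qstep_iff (A, B) q hp).symm) (fun q => Nat.card {c // QT m q c})]
      rw [sum_union, sum_image, sum_image]
      · intro x hx y hy h
        have h1 : insert x A = insert y A := congrArg Prod.fst h
        simp only [coe_sdiff, Set.mem_sdiff, mem_coe, mem_union, not_or] at hx
        have h2 : x ∈ insert y A := h1 ▸ mem_insert_self x A
        rcases mem_insert.1 h2 with h | h
        · exact h
        · exact absurd h hx.2.1
      · intro x hx y hy h
        have h1 : B.erase x = B.erase y := congrArg Prod.snd h
        by_contra hne
        have h2 : x ∈ B.erase y := mem_erase.2 ⟨hne, hx⟩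
        rw [← h1] at h2
        simp at h2
      · rw [disjoint_left]
        rintro q h1 h2
        obtain ⟨x, hx, rfl⟩ := mem_image.1 h1
        obtain ⟨y, hy, h⟩ := mem_image.1 h2
        have h3 : B = B.erase x := congrArg Prod.snd h
        have h4 : x ∈ B.erase x := h3 ▸ hx
        simp at h4
    rw [key]
    dsimp only
    set b := B.card with hb
    set u := (univ \ (A ∪ B)).card with hu
    have e1 : ∀ x ∈ B, Nat.card {c // QT m (A, B.erase x) c} * 2 ^ b =
        if m + 1 = 2 * b + u then 2 * m.factorial else 0 := by
      intro x hx
      have h := ih (A, B.erase x) (by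
        ext y; simp; intro h1 _; exact hd y h1)
      dsimp only at h
      have hbp : 0 < b := card_pos.2 ⟨x, hx⟩
      have c1 : (B.erase x).card = b - 1 := card_erase_of_mem hx
      have c2 : (univ \ (A ∪ B.erase x)).card = u + 1 := by
        have : univ \ (A ∪ B.erase x) = insert x (univ \ (A ∪ B)) := by
          ext y
          have := hd y
          by_cases hyx : y = x
          · subst hyx; simp; tauto
          · simp [hyx]
        rw [this, card_insert_of_notMem (by simp [hx])]
      rw [c1, c2] at h
      obtain ⟨k, hk⟩ : ∃ k, b = k + 1 := ⟨b - 1, by omega⟩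
      rw [hk, pow_succ, ← mul_assoc]
      rw [hk, Nat.add_sub_cancel] at h
      rw [h]
      by_cases hm : m = 2 * k + (u + 1)
      · rw [if_pos hm, if_pos (by omega), mul_comm]
      · rw [if_neg hm, if_neg (by omega), zero_mul]
    have e2 : ∀ x ∈ univ \ (A ∪ B), Nat.card {c // QT m (insert x A, B) c} * 2 ^ b =
        if m + 1 = 2 * b + u then m.factorial else 0 := by
      intro x hx
      have hup : 0 < u := card_pos.2 ⟨x, hx⟩
      have c2 : (univ \ (insert x A ∪ B)).card = u - 1 := by
        have : univ \ (insert x A ∪ B) = (univ \ (A ∪ B)).erase x := by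
          ext y
          simp
        rw [this, card_erase_of_mem hx]
      simp only [mem_sdiff, mem_univ, true_and, mem_union, not_or] at hx
      have h := ih (insert x A, B) (by
        simpa [insert_inter_of_notMem hx.2] using hp)
      dsimp only at h
      rw [c2] at h
      rw [h]
      by_cases hm : m = 2 * b + (u - 1)
      · rw [if_pos hm, if_pos (by omega)]
      · rw [if_neg hm, if_neg (by omega)]
    rw [add_mul, sum_mul, sum_mul, sum_congr rfl e1, sum_congr rfl e2, sum_const, sum_const,
      ← hb, ← hu]
    split_ifs with hm
    · rw [Nat.factorial_succ, hm]
      simp only [smul_eq_mul]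
      ring
    · simp

/-- the number of maximal chains of the lattice `(𝒬(N), ⊑)` equals
`(2n)! / 2^n`, where `n = |N|`. -/
theorem card_maxChains_Q :
    Nat.card {p : Σ m : ℕ, Fin (m + 1) → Finset α × Finset α // IsQMaxChain p.1 p.2}
      = (2 * Fintype.card α).factorial / 2 ^ Fintype.card α := by
  have hc : ∀ m, Nat.card {c // QT m ((∅ : Finset α), (univ : Finset α)) c} *
      2 ^ Fintype.card α = if m = 2 * Fintype.card α then m.factorial else 0 := by
    intro m
    have := card_qt m ((∅ : Finset α), (univ : Finset α)) (by simp)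
    simpa using this
  have e : {p : Σ m : ℕ, Fin (m + 1) → Finset α × Finset α // IsQMaxChain p.1 p.2} ≃
      {c // QT (2 * Fintype.card α) ((∅ : Finset α), (univ : Finset α)) c} := by
    symm
    refine Equiv.ofBijective (fun c => ⟨⟨_, c.1⟩, c.2⟩) ⟨?_, ?_⟩
    · rintro ⟨c, hc⟩ ⟨d, hd⟩ h
      have h1 := congrArg Subtype.val h
      simpa using h1
    · rintro ⟨⟨m, c⟩, h⟩
      have hm : m = 2 * Fintype.card α := by
        by_contra hm
        have h1 := hc m
        rw [if_neg hm] at h1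
        have : Nonempty {c // QT m ((∅ : Finset α), (univ : Finset α)) c} := ⟨⟨c, h⟩⟩
        have h2 : 0 < Nat.card {c // QT m ((∅ : Finset α), (univ : Finset α)) c} :=
          Nat.card_pos
        have := Nat.mul_pos h2 (pow_pos (two_pos) (Fintype.card α))
        omega
      subst hm
      exact ⟨⟨c, h⟩, rfl⟩
  rw [Nat.card_congr e]
  have h := hc (2 * Fintype.card α)
  rw [if_pos rfl] at h
  rw [← h, Nat.mul_div_cancel _ (by positivity)]
end
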